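/- Fix an integer k ≥ 1 and C = (c_0,…,c_k) with each c_p ∈ {0,1}. For every n ≥ 1 and every m with 1 ≤ m ≤ n, O_C(n, m + c_k − 1) ≤ (((n−1)!)^k / (m−1)!) · λ_n^{m−1} · Π_{i=1}^{n−m} F_{i+1}(C′), where λ_n = Σ_{j=2}^{n} F_j(C). -/

import Mathlib

open Finset

/-- `i` is a left-to-right minimum of the permutation `σ`. -/
def IsLTRMin {n : ℕ} (σ : Equiv.Perm (Fin n)) (i : Fin n) : Prop :=
  ∀ i' : Fin n, i' < i → σ i < σ i'

instance {n : ℕ} (σ : Equiv.Perm (Fin n)) : DecidablePred (IsLTRMin σ) := fun i =>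
  inferInstanceAs (Decidable (∀ i' : Fin n, i' < i → σ i < σ i'))

/-- `l(i)`: the number of `w` such that `i` is a left-to-right minimum of `σs w`. -/
def ltrCount {n k : ℕ} (σs : Fin k → Equiv.Perm (Fin n)) (i : Fin n) : ℕ :=
  (univ.filter fun w => IsLTRMin (σs w) i).card

/-- `O_C(n, m)`: the number of `k`-tuples of permutations of `{1,…,n}` such that exactly `m`
indices `i` satisfy `c (l i) = 1`. -/
def Oseq (k : ℕ) (c : ℕ → ℕ) (n m : ℕ) : ℕ :=
  ((univ : Finset (Fin k → Equiv.Perm (Fin n))).filter fun σs =>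
    (univ.filter fun i : Fin n => c (ltrCount σs i) = 1).card = m).card

/-- `F_j(C) = ∑_{p=0}^k c_p · binom(k,p) / (j-1)^p`. -/
noncomputable def Fc (k : ℕ) (c : ℕ → ℕ) (j : ℕ) : ℝ :=
  ∑ p ∈ Finset.range (k + 1), (c p : ℝ) * (k.choose p : ℝ) / ((j - 1 : ℕ) : ℝ) ^ p

/-!
A permutation of `{1, …, n+1}` is a permutation of `{1, …, n}` together with an inserted last value.
The insertion preserves the earlier left-to-right minima and creates a new one exactly when the
inserted value is the smallest. Hence the generating polynomial `∑_m O_C(n, m) X^m` satisfies a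
product recurrence and equals
`((n-1)!)^k X^{c_k} ∏_{j=2}^n (F_j(C) X + F_j(C'))`.
The coefficient of `X^r` in the product is a sum over `r`-subsets. As `F_j(C')` decreases in `j`,
the factors outside a subset contribute at most `∏_{i=1}^{n-1-r} F_{i+1}(C')`,
while the `r`-th elementary symmetric polynomial of the `F_j(C)` is at most `λ_n^r / r!`.
-/

section CoefficientBound

open Polynomial

theorem coeff_prod_C_mul_X_add_C {ι R : Type*} [DecidableEq ι] [CommSemiring R] (s : Finset ι)
    (a b : ι → R) (r : ℕ) :
    (∏ i ∈ s, (C (a i) * X + C (b i))).coeff r =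
      ∑ t ∈ s.powersetCard r, (∏ i ∈ t, a i) * ∏ i ∈ s \ t, b i := by
  have monomial_term (t : Finset ι) : (∏ i ∈ t, C (a i) * X) * ∏ i ∈ s \ t, C (b i) =
      C ((∏ i ∈ t, a i) * ∏ i ∈ s \ t, b i) * X ^ #t := by
    simp only [prod_mul_distrib, prod_const, map_mul, map_prod]
    ring
  simp only [prod_add, monomial_term, finsetSum_coeff, coeff_C_mul_X_pow, powersetCard_eq_filter,
    sum_filter, eq_comm]

variable {R : Type*} [CommSemiring R]

theorem factorial_mul_esymm_le_sum_pow [LinearOrder R] [IsOrderedRing R] [ExistsAddOfLE R]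
    {s : Multiset R} (hs : ∀ x ∈ s, 0 ≤ x) (r : ℕ) :
    (r.factorial : R) * s.esymm r ≤ s.sum ^ r := by
  induction s using Multiset.induction_on generalizing r with
  | empty => cases r <;> simp [Multiset.esymm, Multiset.powersetCard_zero_right]
  | cons x s ih =>
    cases r with
    | zero => simp [Multiset.esymm]
    | succ r =>
      have hx : 0 ≤ x := hs x (Multiset.mem_cons_self x s)
      have hs' : ∀ y ∈ s, 0 ≤ y := fun y hy => hs y (Multiset.mem_cons_of_mem hy)
      have hsum : 0 ≤ s.sum := Multiset.sum_nonneg hs'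
      have esymm_cons : (x ::ₘ s).esymm (r + 1) = s.esymm (r + 1) + x * s.esymm r := by
        simp [Multiset.esymm, Multiset.powersetCard_cons, Multiset.sum_map_mul_left]
      calc ((r + 1).factorial : R) * (x ::ₘ s).esymm (r + 1)
          = (r + 1).factorial * s.esymm (r + 1) +
            (r + 1 : ℕ) * (r.factorial * s.esymm r) * x := by
            rw [esymm_cons, Nat.factorial_succ, Nat.cast_mul]
            ring
        _ ≤ s.sum ^ (r + 1) + (r + 1 : ℕ) * s.sum ^ r * x := by
            gcongr
            exacts [ih hs' (r + 1), ih hs' r]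
        _ ≤ (s.sum + x) ^ (r + 1) := by
            have h : 0 ≤ 2 * s.sum + x := add_nonneg (mul_nonneg zero_le_two hsum) hx
            simpa only [Nat.add_sub_cancel] using pow_add_mul_le_add_pow hsum h (r + 1)
        _ = (x ::ₘ s).sum ^ (r + 1) := by rw [Multiset.sum_cons, add_comm]

theorem prod_le_prod_range_card_of_antitone [PartialOrder R] [IsOrderedRing R] {b : ℕ → R}
    (hb : Antitone b) (hb0 : ∀ i, 0 ≤ b i) (t : Finset ℕ) :
    ∏ i ∈ t, b i ≤ ∏ i ∈ range #t, b i := by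
  induction t using Finset.induction_on_max with
  | empty => simp
  | insert m t hm ih =>
    have hmt : m ∉ t := fun h => (hm m h).false
    have card_le : #t ≤ m := by
      simpa using card_le_card fun i hi => mem_range.2 (hm i hi)
    rw [prod_insert hmt, card_insert_of_notMem hmt, prod_range_succ, mul_comm]
    exact mul_le_mul ih (hb card_le) (hb0 m) (prod_nonneg fun i _ => hb0 i)

theorem factorial_mul_coeff_prod_le [LinearOrder R] [IsOrderedRing R] [ExistsAddOfLE R]
    {a b : ℕ → R} (ha : ∀ i, 0 ≤ a i) (hb : Antitone b) (hb0 : ∀ i, 0 ≤ b i) (n r : ℕ) :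
    (r.factorial : R) * (∏ i ∈ range n, (C (a i) * X + C (b i))).coeff r ≤
      (∑ i ∈ range n, a i) ^ r * ∏ i ∈ range (n - r), b i := by
  have complement_le : ∀ t ∈ (range n).powersetCard r,
      ∏ i ∈ range n \ t, b i ≤ ∏ i ∈ range (n - r), b i := by
    intro t ht
    obtain ⟨htn, rfl⟩ := mem_powersetCard.1 ht
    simpa [card_sdiff_of_subset htn] using prod_le_prod_range_card_of_antitone hb hb0 (range n \ t)
  have esymm_le : (r.factorial : R) * ∑ t ∈ (range n).powersetCard r, ∏ i ∈ t, a i ≤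
      (∑ i ∈ range n, a i) ^ r := by
    simpa only [Finset.esymm_map_val, Finset.sum_map_val] using
      factorial_mul_esymm_le_sum_pow (s := (range n).val.map a) (by simpa using fun i _ => ha i) r
  calc (r.factorial : R) * (∏ i ∈ range n, (C (a i) * X + C (b i))).coeff r
      ≤ r.factorial * ∑ t ∈ (range n).powersetCard r,
          (∏ i ∈ t, a i) * ∏ i ∈ range (n - r), b i := by
        rw [coeff_prod_C_mul_X_add_C]
        refine mul_le_mul_of_nonneg_left (sum_le_sum fun t ht => ?_) (Nat.cast_nonneg _)
        exact mul_le_mul_of_nonneg_left (complement_le t ht) (prod_nonneg fun i _ => ha i)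
    _ = (r.factorial * ∑ t ∈ (range n).powersetCard r, ∏ i ∈ t, a i) *
          ∏ i ∈ range (n - r), b i := by rw [← sum_mul, mul_assoc]
    _ ≤ (∑ i ∈ range n, a i) ^ r * ∏ i ∈ range (n - r), b i := by
        gcongr
        exact prod_nonneg fun i _ => hb0 i

end CoefficientBound

section ValueCount

variable {ι α : Type*} [Fintype ι] [DecidableEq ι] [Fintype α] [DecidableEq α]

theorem card_filter_fiber_eq (a : α) (S : Finset ι) :
    #{p : ι → α | ({i | p i = a} : Finset ι) = S} =
      (Fintype.card α - 1) ^ (Fintype.card ι - #S) := by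
  have fiber_eq_piFinset : ({p : ι → α | ({i | p i = a} : Finset ι) = S} : Finset (ι → α)) =
      Fintype.piFinset fun i => if i ∈ S then {a} else {a}ᶜ := by
    ext p
    simp only [mem_filter_univ, Fintype.mem_piFinset, Finset.ext_iff]
    refine forall_congr' fun i => ?_
    by_cases hi : i ∈ S <;> simp [hi]
  simp [fiber_eq_piFinset, apply_ite card, prod_ite, card_compl, filter_not, card_univ_sdiff]

theorem sum_apply_card_filter_eq {M : Type*} [AddCommMonoid M] (a : α) (f : ℕ → M) :
    ∑ p : ι → α, f #{i | p i = a} =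
      ∑ l ∈ range (Fintype.card ι + 1), (Fintype.card ι).choose l •
        (Fintype.card α - 1) ^ (Fintype.card ι - l) • f l := by
  calc ∑ p : ι → α, f #{i | p i = a}
      = ∑ S : Finset ι, ∑ p : ι → α with ({i | p i = a} : Finset ι) = S, f #{i | p i = a} :=
        (sum_fiberwise univ _ _).symm
    _ = ∑ S : Finset ι, (Fintype.card α - 1) ^ (Fintype.card ι - #S) • f #S := by
        refine sum_congr rfl fun S _ => ?_
        rw [sum_congr rfl fun p hp => by rw [(mem_filter.1 hp).2], sum_const,
          card_filter_fiber_eq]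
    _ = _ := by
        rw [← powerset_univ, sum_powerset_apply_card
          fun l => (Fintype.card α - 1) ^ (Fintype.card ι - l) • f l, card_univ]

end ValueCount

section InsertLast

variable {n : ℕ}

/-- Insert a last position carrying the value `p` into the one-line notation of `σ`, shifting the
values `≥ p` of `σ` up by one. -/
def insertLast (p : Fin (n + 1)) (σ : Equiv.Perm (Fin n)) : Equiv.Perm (Fin (n + 1)) :=
  finSuccEquivLast.trans (σ.optionCongr.trans (finSuccEquiv' p).symm)

theorem insertLast_last (p : Fin (n + 1)) (σ : Equiv.Perm (Fin n)) :
    insertLast p σ (Fin.last n) = p := by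
  simp [insertLast]

theorem insertLast_castSucc (p : Fin (n + 1)) (σ : Equiv.Perm (Fin n)) (i : Fin n) :
    insertLast p σ i.castSucc = p.succAbove (σ i) := by
  simp [insertLast]

theorem insertLast_bijective :
    Function.Bijective fun x : Fin (n + 1) × Equiv.Perm (Fin n) => insertLast x.1 x.2 := by
  rw [Fintype.bijective_iff_injective_and_card]
  refine ⟨?_, by simp [Fintype.card_perm, Nat.factorial_succ]⟩
  rintro ⟨p, σ⟩ ⟨q, τ⟩ (h : insertLast p σ = insertLast q τ)
  obtain rfl : p = q := by rw [← insertLast_last p σ, h, insertLast_last]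
  have hστ : σ = τ := Equiv.ext fun i => p.succAbove_right_injective <| by
    rw [← insertLast_castSucc, h, insertLast_castSucc]
  rw [hστ]

theorem isLTRMin_insertLast_castSucc (p : Fin (n + 1)) (σ : Equiv.Perm (Fin n)) (i : Fin n) :
    IsLTRMin (insertLast p σ) i.castSucc ↔ IsLTRMin σ i := by
  simp [IsLTRMin, Fin.forall_fin_succ', insertLast_castSucc, Fin.succAbove_lt_succAbove_iff,
    (Fin.castSucc_lt_last i).not_gt]

theorem isLTRMin_insertLast_last (p : Fin (n + 1)) (σ : Equiv.Perm (Fin n)) :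
    IsLTRMin (insertLast p σ) (Fin.last n) ↔ p = 0 := by
  constructor
  · intro h
    by_contra hp
    obtain ⟨j, hj⟩ := (insertLast p σ).surjective 0
    have hj_last : j ≠ Fin.last n := by
      rintro rfl
      exact hp (insertLast_last p σ ▸ hj)
    exact Fin.not_lt_zero _ (hj ▸ h j (Fin.lt_last_iff_ne_last.2 hj_last))
  · rintro rfl
    simp [IsLTRMin, Fin.forall_fin_succ', insertLast_castSucc, insertLast_last]

end InsertLast

section GeneratingPolynomial

open Polynomial

variable {k n : ℕ} {c : ℕ → ℕ}

/-- The number of indices `i` with `c (l i) = 1`, the statistic whose distribution is `Oseq`. -/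
def markedCount (c : ℕ → ℕ) (σs : Fin k → Equiv.Perm (Fin n)) : ℕ :=
  #{i | c (ltrCount σs i) = 1}

/-- The generating polynomial `∑_m O_C(n, m) X^m`, as a sum over all `k`-tuples. -/
noncomputable def genPoly (k : ℕ) (c : ℕ → ℕ) (n : ℕ) : ℝ[X] :=
  ∑ σs : Fin k → Equiv.Perm (Fin n), X ^ markedCount c σs

theorem coeff_genPoly (k : ℕ) (c : ℕ → ℕ) (n m : ℕ) :
    (genPoly k c n).coeff m = Oseq k c n m := by
  simp [genPoly, Oseq, markedCount, coeff_X_pow, eq_comm]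

theorem markedCount_insertLast (hc : ∀ l ≤ k, c l = 0 ∨ c l = 1) (p : Fin k → Fin (n + 1))
    (σs : Fin k → Equiv.Perm (Fin n)) :
    markedCount c (fun w => insertLast (p w) (σs w)) = c #{w | p w = 0} + markedCount c σs := by
  have ltrCount_castSucc (i : Fin n) :
      ltrCount (fun w => insertLast (p w) (σs w)) i.castSucc = ltrCount σs i := by
    simp only [ltrCount, isLTRMin_insertLast_castSucc]
  have ltrCount_last :
      ltrCount (fun w => insertLast (p w) (σs w)) (Fin.last n) = #{w | p w = 0} := by
    simp only [ltrCount, isLTRMin_insertLast_last]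
  have indicator_eq : (if c #{w | p w = 0} = 1 then 1 else 0) = c #{w | p w = 0} := by
    rcases hc #{w | p w = 0} (card_finset_fin_le _) with h | h <;> simp [h]
  rw [markedCount, card_filter, Fin.sum_univ_castSucc, ltrCount_last, indicator_eq, add_comm]
  simp only [ltrCount_castSucc, markedCount, card_filter]

theorem genPoly_succ (hc : ∀ l ≤ k, c l = 0 ∨ c l = 1) (n : ℕ) :
    genPoly k c (n + 1) =
      (∑ p : Fin k → Fin (n + 1), X ^ c #{w | p w = 0}) * genPoly k c n := by
  let insertTuple : (Fin k → Fin (n + 1)) × (Fin k → Equiv.Perm (Fin n)) ≃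
      (Fin k → Equiv.Perm (Fin (n + 1))) :=
    (Equiv.arrowProdEquivProdArrow _ _ _).symm.trans
      (Equiv.piCongrRight fun _ => Equiv.ofBijective _ insertLast_bijective)
  calc genPoly k c (n + 1)
      = ∑ x : (Fin k → Fin (n + 1)) × (Fin k → Equiv.Perm (Fin n)),
          X ^ markedCount c (fun w => insertLast (x.1 w) (x.2 w)) :=
        (insertTuple.sum_comp _).symm
    _ = (∑ p : Fin k → Fin (n + 1), X ^ c #{w | p w = 0}) * genPoly k c n := by
        simp only [markedCount_insertLast hc, pow_add, Fintype.sum_prod_type, genPoly,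
          Fintype.sum_mul_sum]

theorem pow_mul_fc_succ (k : ℕ) (c : ℕ → ℕ) (hn : n ≠ 0) :
    n ^ k * Fc k c (n + 1) = ∑ l ∈ range (k + 1), (k.choose l * n ^ (k - l) * c l : ℝ) := by
  rw [Fc, mul_sum]
  refine sum_congr rfl fun l hl => ?_
  have hn' : (n : ℝ) ≠ 0 := Nat.cast_ne_zero.2 hn
  rw [pow_sub₀ _ hn' (mem_range_succ_iff.1 hl), Nat.add_sub_cancel]
  field_simp

theorem sum_X_pow_card_zeros (hc : ∀ l ≤ k, c l = 0 ∨ c l = 1) (hn : n ≠ 0) :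
    ∑ p : Fin k → Fin (n + 1), (X : ℝ[X]) ^ c #{w | p w = 0} =
      C (n ^ k : ℝ) * (C (Fc k c (n + 1)) * X + C (Fc k (fun l => 1 - c l) (n + 1))) := by
  have X_pow_c {l : ℕ} (hl : l ≤ k) :
      (X : ℝ[X]) ^ c l = C (c l : ℝ) * X + C ((1 - c l : ℕ) : ℝ) := by
    rcases hc l hl with h | h <;> simp [h]
  rw [mul_add, ← mul_assoc, ← C_mul, ← C_mul, pow_mul_fc_succ k c hn,
    pow_mul_fc_succ k _ hn, map_sum, map_sum, sum_mul, ← sum_add_distrib,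
    sum_apply_card_filter_eq (0 : Fin (n + 1)) fun l => (X : ℝ[X]) ^ c l]
  simp only [Fintype.card_fin, Nat.add_sub_cancel]
  refine sum_congr rfl fun l hl => ?_
  rw [X_pow_c (mem_range_succ_iff.1 hl)]
  simp only [nsmul_eq_mul, map_mul, map_pow, map_natCast, Nat.cast_pow]
  ring

theorem genPoly_one (hc : ∀ l ≤ k, c l = 0 ∨ c l = 1) : genPoly k c 1 = X ^ c k := by
  have genPoly_zero : genPoly k c 0 = 1 := by simp [genPoly, markedCount]
  rw [genPoly_succ hc, genPoly_zero]
  simp [Subsingleton.elim _ (0 : Fin 1)]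

theorem genPoly_succ_eq_prod (hc : ∀ l ≤ k, c l = 0 ∨ c l = 1) (n : ℕ) :
    genPoly k c (n + 1) = C (n.factorial ^ k : ℝ) *
      (∏ i ∈ range n, (C (Fc k c (i + 2)) * X + C (Fc k (fun l => 1 - c l) (i + 2)))) *
        X ^ c k := by
  induction n with
  | zero => simp [genPoly_one hc]
  | succ n ih =>
    rw [genPoly_succ hc, ih, sum_X_pow_card_zeros hc n.succ_ne_zero, prod_range_succ,
      Nat.factorial_succ, Nat.cast_mul, mul_pow, C_mul]
    ring

theorem oseq_succ_add_eq_coeff (hc : ∀ l ≤ k, c l = 0 ∨ c l = 1) (n r : ℕ) :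
    (Oseq k c (n + 1) (r + c k) : ℝ) = n.factorial ^ k *
      (∏ i ∈ range n,
        (C (Fc k c (i + 2)) * X + C (Fc k (fun l => 1 - c l) (i + 2)))).coeff r := by
  rw [← coeff_genPoly, genPoly_succ_eq_prod hc, coeff_mul_X_pow, coeff_C_mul]

end GeneratingPolynomial

theorem fc_nonneg (k : ℕ) (c : ℕ → ℕ) (j : ℕ) : 0 ≤ Fc k c j := by
  unfold Fc
  positivity

theorem antitone_fc_add_two (k : ℕ) (c : ℕ → ℕ) : Antitone fun i => Fc k c (i + 2) := by
  intro i j hij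
  simp only [Fc, Nat.add_succ_sub_one]
  gcongr

/-- Theorem 2.3 (upper bound):
`O_C(n, m + c_k - 1) ≤ ((n-1)!)^k/(m-1)! · λ_n^{m-1} · ∏_{i=1}^{n-m} F_{i+1}(C')`
where `λ_n = ∑_{j=2}^n F_j(C)`. -/
theorem stmt_11 (k : ℕ) (hk : 1 ≤ k) (c : ℕ → ℕ) (hc : ∀ p ≤ k, c p = 0 ∨ c p = 1)
    (n m : ℕ) (hn : 1 ≤ n) (hm1 : 1 ≤ m) (hmn : m ≤ n) :
    (Oseq k c n (m + c k - 1) : ℝ) ≤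
      ((n - 1).factorial : ℝ) ^ k / ((m - 1).factorial : ℝ) *
        (∑ j ∈ Finset.Icc 2 n, Fc k c j) ^ (m - 1) *
        ∏ i ∈ Finset.Icc 1 (n - m), Fc k (fun p => 1 - c p) (i + 1) := by
  obtain ⟨n, rfl⟩ : ∃ d, n = d + 1 := Nat.exists_eq_add_of_le' hn
  obtain ⟨r, rfl⟩ : ∃ d, m = d + 1 := Nat.exists_eq_add_of_le' hm1
  have sum_shift : ∑ j ∈ Icc 2 (n + 1), Fc k c j = ∑ i ∈ range n, Fc k c (i + 2) := by
    rw [range_eq_Ico, sum_Ico_add' (Fc k c) 0 n 2]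
    rfl
  have prod_shift (b : ℕ → ℝ) : ∏ i ∈ Icc 1 (n - r), b (i + 1) =
      ∏ i ∈ range (n - r), b (i + 2) := by
    rw [range_eq_Ico, prod_Ico_add' (fun i => b (i + 1)) 0 (n - r) 1]
    rfl
  have coeff_bound := factorial_mul_coeff_prod_le (fun i => fc_nonneg k c (i + 2))
    (antitone_fc_add_two k fun p => 1 - c p) (fun i => fc_nonneg k _ (i + 2)) n r
  rw [Nat.add_right_comm, Nat.add_sub_cancel, Nat.add_sub_cancel, Nat.add_sub_cancel,
    Nat.add_sub_add_right, sum_shift, prod_shift, oseq_succ_add_eq_coeff hc, div_mul_eq_mul_div,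
    div_mul_eq_mul_div, mul_assoc, mul_div_assoc]
  gcongr
  rwa [le_div_iff₀' (by positivity)]
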